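/- For all natural numbers n, q, and t, the number of area sequences of size n with dinv equal to q and area equal to t is equal to the number of area sequences of size n with area equal to q and bounce equal to t. -/

import Mathlib

/-- The `i`-th letter of the word `w` (`1`-indexed, as in the paper);
defaults to `0` out of range. -/
def get1 (w : List ℕ) (i : ℕ) : ℕ := w.getD (i - 1) 0

/-- `w` is the area sequence of a Dyck path: the first letter is `0` and each
letter exceeds the previous one by at most one. -/
def IsAreaSeq (w : List ℕ) : Prop :=
  (w ≠ [] → get1 w 1 = 0) ∧ ∀ i, 1 ≤ i → i < w.length → get1 w (i + 1) ≤ get1 w i + 1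

/-- Insertion at position `i` (for `0 ≤ i ≤ n`): `ins w 0` prepends a `0`, and
for `1 ≤ i ≤ n`, `ins w i` inserts the letter `w_i + 1` just after position `i`. -/
def ins (w : List ℕ) (i : ℕ) : List ℕ :=
  w.take i ++ (if i = 0 then 0 else get1 w i + 1) :: w.drop i

/-- The area statistic: the sum of the letters. -/
def area (w : List ℕ) : ℕ := w.sum

/-- The dinv statistic: `dinv w = Σ_i d_i` where `d_i` is the number of `j > i`
with `w_j = w_i` or `w_j = w_i - 1`. -/
def dinv (w : List ℕ) : ℕ :=
  ∑ i ∈ Finset.Icc 1 w.length,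
    ((Finset.Ioc i w.length).filter
      (fun j => get1 w j = get1 w i ∨ get1 w j + 1 = get1 w i)).card

/-- The maximal value of a word (`0` for the empty word). -/
def maxVal (w : List ℕ) : ℕ := w.foldr max 0

/-- Positions of the letters of maximal value `m`. -/
def Maxb (w : List ℕ) : Finset ℕ :=
  (Finset.Icc 1 w.length).filter (fun i => get1 w i = maxVal w)

/-- Positions `i` with `w_i = m - 1` such that all letters after position `i`
are `< m`. -/
def Maxa (w : List ℕ) : Finset ℕ :=
  (Finset.Icc 1 w.length).filter (fun i =>
    get1 w i + 1 = maxVal w ∧ ∀ j ∈ Finset.Ioc i w.length, get1 w j < maxVal w)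

/-- The position of the leftmost letter equal to the maximal value `m` in the
rightmost block of consecutive letters equal to `m`. -/
def i0 (w : List ℕ) : ℕ :=
  ((Finset.Icc 1 w.length).filter (fun i =>
    get1 w i = maxVal w ∧ (i = 1 ∨ get1 w (i - 1) ≠ maxVal w))).sup id

/-- The admissible insertion positions of `w`, listed in admissible order:
the elements of `Maxb w` in decreasing order, then the elements of `Maxa w`
in decreasing order, then `i0 w - 1`.  The empty word has the single
admissible insertion position `0`. -/
def admissible (w : List ℕ) : List ℕ :=
  if w = [] then [0]
  else ((Maxb w).sort (· ≤ ·)).reverse ++ ((Maxa w).sort (· ≤ ·)).reverse ++ [i0 w - 1]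

/-- Auxiliary version of the map `ψ`, reading the reversed word. -/
def psiRev : List ℕ → List ℕ
  | [] => []
  | a :: u => ins (psiRev u) ((admissible (psiRev u)).getD a 0)

/-- The map `ψ`: `ψ(ε) = ε` and `ψ(u a) = ins_{c_a}(ψ(u))` where
`c_0, c_1, …, c_k` are the admissible insertion positions of `ψ(u)` in
admissible order. -/
def psi (w : List ℕ) : List ℕ := psiRev w.reverse

/-- The bounce sequence: `b_1 = 0`, and `b_i = b_{i-1} + 1` if
`b_{i-1} + 1 ≤ w_i`, otherwise `b_i = 0`. -/
def bseq (w : List ℕ) : ℕ → ℕ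
  | 0 => 0
  | 1 => 0
  | (i + 2) => if bseq w (i + 1) + 1 ≤ get1 w (i + 2) then bseq w (i + 1) + 1 else 0

/-- The bounces of `w`: positions `1 < i ≤ n` with `b_i = 0`. -/
def bounces (w : List ℕ) : Finset ℕ :=
  (Finset.Icc 2 w.length).filter (fun i => bseq w i = 0)

/-- The bounce statistic: the sum of the reversed positions `n - i + 1` of the
bounces of `w`. -/
def bounce (w : List ℕ) : ℕ := ∑ i ∈ bounces w, (w.length - i + 1)


/-- Recursive form of dinv. -/
def dinvR : List ℕ → ℕ
  | [] => 0
  | h :: t => t.countP (fun j => decide (j = h ∨ j + 1 = h)) + dinvR t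

theorem card_filter_get1 (p : ℕ → Prop) [DecidablePred p] (t : List ℕ) :
    ((Finset.Ioc 0 t.length).filter (fun j => p (get1 t j))).card
      = t.countP (fun j => decide (p j)) := by
  induction t using List.reverseRecOn with
  | nil => simp
  | append_singleton t a ih =>
    have h : Finset.Ioc 0 (t ++ [a]).length = insert (t.length + 1) (Finset.Ioc 0 t.length) := by
      ext j; simp; omega
    rw [h, Finset.filter_insert]
    have h2 : (Finset.Ioc 0 t.length).filter (fun j => p (get1 (t ++ [a]) j))
        = (Finset.Ioc 0 t.length).filter (fun j => p (get1 t j)) := by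
      apply Finset.filter_congr
      intro j hj
      simp only [Finset.mem_Ioc] at hj
      have : get1 (t ++ [a]) j = get1 t j := by
        unfold get1
        rw [List.getD_append _ _ _ _ (by omega)]
      rw [this]
    rw [h2]
    have h3 : get1 (t ++ [a]) (t.length + 1) = a := by simp [get1]
    rw [h3]
    by_cases hp : p a
    · rw [if_pos hp, Finset.card_insert_of_notMem (by simp), ih]; simp [hp]
    · rw [if_neg hp, ih]; simp [hp]

theorem get1_cons_succ (h : ℕ) (t : List ℕ) (i : ℕ) (hi : 1 ≤ i) :
    get1 (h :: t) (i + 1) = get1 t i := by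
  obtain ⟨k, rfl⟩ : ∃ k, i = k + 1 := ⟨i - 1, by omega⟩
  simp [get1]

theorem card_shift (P Q : ℕ → Prop) [DecidablePred P] [DecidablePred Q] (a b : ℕ)
    (h : ∀ j, a < j → (P (j + 1) ↔ Q j)) :
    ((Finset.Ioc (a + 1) (b + 1)).filter P).card = ((Finset.Ioc a b).filter Q).card := by
  have : (Finset.Ioc (a + 1) (b + 1)).filter P
      = ((Finset.Ioc a b).filter Q).map (addRightEmbedding 1) := by
    ext j
    simp only [Finset.mem_filter, Finset.mem_Ioc, Finset.mem_map, addRightEmbedding_apply]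
    constructor
    · rintro ⟨⟨h1, h2⟩, h3⟩
      obtain ⟨k, rfl⟩ : ∃ k, j = k + 1 := ⟨j - 1, by omega⟩
      exact ⟨k, ⟨⟨by omega, by omega⟩, (h k (by omega)).1 h3⟩, rfl⟩
    · rintro ⟨k, ⟨⟨h1, h2⟩, h3⟩, rfl⟩
      exact ⟨⟨by omega, by omega⟩, (h k h1).2 h3⟩
  rw [this, Finset.card_map]

theorem dinv_cons (h : ℕ) (t : List ℕ) :
    dinv (h :: t) = t.countP (fun j => decide (j = h ∨ j + 1 = h)) + dinv t := by
  unfold dinv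
  have h1 : Finset.Icc 1 (h :: t).length
      = insert 1 ((Finset.Icc 1 t.length).map (addRightEmbedding 1)) := by
    ext j
    simp only [Finset.mem_Icc, List.length_cons, Finset.mem_insert, Finset.mem_map,
      addRightEmbedding_apply]
    constructor
    · intro hj
      by_cases h1 : j = 1
      · exact Or.inl h1
      · exact Or.inr ⟨j - 1, by omega, by omega⟩
    · rintro (rfl | ⟨k, hk, rfl⟩) <;> omega
  rw [h1, Finset.sum_insert (by simp), Finset.sum_map]
  congr 1
  · rw [← card_filter_get1 (fun j => j = h ∨ j + 1 = h)]
    apply card_shift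
    intro j hj
    rw [get1_cons_succ _ _ _ hj]
    simp [get1]
  · apply Finset.sum_congr rfl
    intro i hi
    simp only [Finset.mem_Icc] at hi
    apply card_shift
    intro j hj
    simp only [addRightEmbedding_apply]
    rw [get1_cons_succ _ _ _ hi.1, get1_cons_succ _ _ _ (by omega)]

theorem dinv_eq (w : List ℕ) : dinv w = dinvR w := by
  induction w with
  | nil => simp [dinv, dinvR]
  | cons h t ih => rw [dinv_cons, dinvR, ih]

theorem dinvR_insert (M : ℕ) (A z : List ℕ) (hA : ∀ c ∈ A, c ≤ M) (hz : M ∉ z) :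
    dinvR (A ++ M :: z)
      = dinvR (A ++ z) + (A.count M + z.countP (fun j => decide (j + 1 = M))) := by
  induction A with
  | nil =>
    simp only [List.nil_append, dinvR, List.count_nil]
    have : z.countP (fun j => decide (j = M ∨ j + 1 = M))
        = z.countP (fun j => decide (j + 1 = M)) := by
      apply List.countP_congr
      intro j hj
      have : j ≠ M := fun e => hz (e ▸ hj)
      simp [this]
    omega
  | cons b A ih =>
    have ih := ih (fun c hc => hA c (by simp [hc]))
    have hb : b ≤ M := hA b (by simp)
    simp only [List.cons_append, dinvR, ih, List.countP_append, List.countP_cons, List.count_cons]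
    by_cases e : b = M
    · simp [e]; omega
    · have e1 : ¬ (M = b ∨ M + 1 = b) := by omega
      simp [e, e1]; omega

theorem isAreaSeq_iff (w : List ℕ) :
    IsAreaSeq w ↔ w.headD 0 = 0 ∧ w.IsChain (fun a b => b ≤ a + 1) := by
  unfold IsAreaSeq
  rw [List.isChain_iff_getElem]
  apply and_congr
  · cases w <;> simp [get1]
  · constructor
    · intro h i hi
      have := h (i + 1) (by omega) hi
      simp only [get1, Nat.add_sub_cancel] at this
      rwa [List.getD_eq_getElem _ _ hi, List.getD_eq_getElem _ _ (by omega)] at this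
    · intro h i h1 hi
      obtain ⟨k, rfl⟩ : ∃ k, i = k + 1 := ⟨i - 1, by omega⟩
      have := h k hi
      simp only [get1, Nat.add_sub_cancel]
      rwa [List.getD_eq_getElem _ _ hi, List.getD_eq_getElem _ _ (by omega)]

theorem isAreaSeq_insert (B z : List ℕ) (p M : ℕ) (h : IsAreaSeq (B ++ p :: z)) (hp : M ≤ p + 1)
    (hz : ∀ c ∈ z, c ≤ M) : IsAreaSeq ((B ++ [p]) ++ M :: z) := by
  rw [isAreaSeq_iff] at *
  obtain ⟨h0, h1⟩ := h
  constructor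
  · cases B <;> simpa using h0
  · rw [List.append_assoc, List.singleton_append]
    rw [List.isChain_append] at h1 ⊢
    refine ⟨h1.1, ?_, by simpa using h1.2.2⟩
    have h2 := h1.2.1
    rw [List.isChain_cons] at h2
    rw [List.isChain_cons_cons]
    refine ⟨hp, ?_⟩
    rw [List.isChain_cons]
    refine ⟨?_, h2.2⟩
    intro y hy
    have := hz y (List.mem_of_mem_head? hy)
    omega

theorem isAreaSeq_snoc (u : List ℕ) (a : ℕ) (h : IsAreaSeq (u ++ [a])) :
    IsAreaSeq u ∧ a ≤ u.getLastD 0 + 1 ∧ (u = [] → a = 0) := by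
  rw [isAreaSeq_iff] at *
  obtain ⟨h0, h1⟩ := h
  rw [List.isChain_append] at h1
  refine ⟨⟨?_, h1.1⟩, ?_, ?_⟩
  · cases u
    · rfl
    · simpa using h0
  · induction u using List.reverseRecOn with
    | nil => simp at h0 ⊢; omega
    | append_singleton u b _ => simpa using h1.2.2
  · rintro rfl; simpa using h0

/-- `v'` is obtained from `v` by inserting a letter that is its rightmost maximum. -/
def StepR (v : List ℕ) (a : ℕ) (v' : List ℕ) : Prop :=
  ∃ M A z, v' = A ++ M :: z ∧ v = A ++ z ∧ (∀ c ∈ v', c ≤ M) ∧ M ∉ z ∧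
    a = A.count M + z.countP (fun j => decide (j + 1 = M))

theorem split_unique (M : ℕ) (A B z y : List ℕ) (hz : M ∉ z) (hy : M ∉ y)
    (h : A ++ M :: z = B ++ M :: y) : A = B ∧ z = y := by
  rw [List.append_eq_append_iff] at h
  rcases h with ⟨c, h1, h2⟩ | ⟨c, h1, h2⟩
  · cases c with
    | nil => simp at h1 h2; exact ⟨h1.symm, h2⟩
    | cons d c => simp at h2; exfalso; apply hz; rw [h2.2]; simp
  · cases c with
    | nil => simp at h1 h2; exact ⟨h1, h2.symm⟩
    | cons d c => simp at h2; exfalso; apply hy; rw [h2.2]; simp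

theorem StepR.unique {v₁ v₂ v' : List ℕ} {a₁ a₂ : ℕ} (h₁ : StepR v₁ a₁ v') (h₂ : StepR v₂ a₂ v') :
    v₁ = v₂ ∧ a₁ = a₂ := by
  obtain ⟨M, A, z, e, rfl, hM, hz, rfl⟩ := h₁
  obtain ⟨N, B, y, e', rfl, hN, hy, rfl⟩ := h₂
  have : M = N := le_antisymm (hN M (by simp [e])) (hM N (by simp [e']))
  subst this
  obtain ⟨rfl, rfl⟩ := split_unique M A B z y hz hy (e.symm.trans e')
  exact ⟨rfl, rfl⟩

/-- The recording relation. -/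
inductive RelR : List ℕ → List ℕ → Prop
  | nil : RelR [] []
  | step {u v v' : List ℕ} {a : ℕ} : RelR u v → StepR v a v' → RelR (u ++ [a]) v'

theorem RelR.unique {u₁ v : List ℕ} (h₁ : RelR u₁ v) : ∀ {u₂ : List ℕ}, RelR u₂ v → u₁ = u₂ := by
  induction h₁ with
  | nil =>
    intro u₂ h₂
    cases h₂ with
    | nil => rfl
    | step _ s => obtain ⟨M, A, z, e, _⟩ := s; simp at e
  | step h s ih =>
    intro u₂ h₂
    cases h₂ with
    | nil => obtain ⟨M, A, z, e, _⟩ := s; simp at e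
    | step h' s' =>
      obtain ⟨rfl, rfl⟩ := s.unique s'
      rw [ih h']

/-- Invariants of a word: maximum, multiplicity of the maximum, label. -/
def GoodR (v : List ℕ) (m c l : ℕ) : Prop :=
  (∀ b ∈ v, b ≤ m) ∧ c = v.count m ∧ ∃ A z, v = A ++ m :: z ∧ m ∉ z ∧
    l + 1 = c + z.countP (fun j => decide (j + 1 = m))

theorem split_countP (p : ℕ → Bool) (l : List ℕ) (a : ℕ) (h : a < l.countP p) :
    ∃ l₁ b l₂, l = l₁ ++ b :: l₂ ∧ p b = true ∧ l₂.countP p = a := by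
  induction l with
  | nil => simp at h
  | cons b l ih =>
    by_cases h1 : a < l.countP p
    · obtain ⟨l₁, d, l₂, rfl, h2, h3⟩ := ih h1
      exact ⟨b :: l₁, d, l₂, rfl, h2, h3⟩
    · by_cases hb : p b = true
      · refine ⟨[], b, l, rfl, hb, ?_⟩
        simp [hb] at h; omega
      · simp [hb] at h; omega

/-- Insertion of a new rightmost maximum: all conclusions. -/
theorem insert_all (B z : List ℕ) (p M a : ℕ) (h : IsAreaSeq (B ++ p :: z)) (hp : M ≤ p + 1)
    (hB : ∀ c ∈ B ++ p :: z, c ≤ M) (hz : M ∉ z)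
    (ha : a = (B ++ [p]).count M + z.countP (fun j => decide (j + 1 = M))) :
    ∃ v', StepR (B ++ p :: z) a v' ∧ IsAreaSeq v' ∧
      GoodR v' M ((B ++ p :: z).count M + 1) a ∧
      area v' = area (B ++ p :: z) + M ∧ dinv v' = dinv (B ++ p :: z) + a ∧
      v'.length = (B ++ p :: z).length + 1 := by
  have e : B ++ p :: z = (B ++ [p]) ++ z := by simp
  have hle : ∀ c ∈ (B ++ [p]) ++ M :: z, c ≤ M := by
    intro c hc
    by_cases hcM : c = M
    · omega
    · apply hB; simp at hc ⊢; tauto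
  have hzc : z.count M = 0 := List.count_eq_zero_of_not_mem hz
  refine ⟨(B ++ [p]) ++ M :: z, ⟨M, B ++ [p], z, rfl, e, hle, hz, ha⟩,
    isAreaSeq_insert B z p M h hp (fun c hc => hB c (by simp [hc])), ⟨hle, ?_, B ++ [p], z, rfl, hz, ?_⟩,
    ?_, ?_, ?_⟩
  · rw [e]; simp [List.count_append, List.count_cons]; omega
  · rw [ha, e, List.count_append (l₁ := B ++ [p]), hzc]; omega
  · simp [area]; omega
  · rw [dinv_eq, dinv_eq, e, dinvR_insert, ha]
    · intro c hc; apply hle; simp at hc ⊢; tauto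
    · exact hz
  · simp; omega

theorem step_exists (v : List ℕ) (m c l a : ℕ) (hv : IsAreaSeq v) (hg : GoodR v m c l)
    (ha : a ≤ l + 1) :
    ∃ v', StepR v a v' ∧ IsAreaSeq v' ∧
      GoodR v' (if c ≤ a then m else m + 1) (if c ≤ a then c + 1 else 1) a ∧
      area v' = area v + (if c ≤ a then m else m + 1) ∧ dinv v' = dinv v + a ∧
      v'.length = v.length + 1 := by
  obtain ⟨hm, hc, A, z, hAz, hz, hl⟩ := hg
  by_cases h : c ≤ a
  · simp only [if_pos h]
    have hzc : z.count m = 0 := List.count_eq_zero_of_not_mem hz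
    by_cases h2 : a = l + 1
    · subst hAz
      rw [hc]
      apply insert_all A z m m a hv (by omega) hm hz
      rw [h2, hl, hc]
      simp [List.count_append, hzc]
    · obtain ⟨z₁, b, z₂, rfl, hb, hcnt⟩ := split_countP (fun j => decide (j + 1 = m)) z (a - c) (by omega)
      simp at hb
      have e : v = (A ++ m :: z₁) ++ b :: z₂ := by simp [hAz]
      have hz2 : m ∉ z₂ := fun hh => hz (by simp [hh])
      have hz2c : z₂.count m = 0 := List.count_eq_zero_of_not_mem hz2
      rw [e] at hv hm hc ⊢
      rw [hc]
      apply insert_all _ z₂ b m a hv (by omega) hm hz2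
      rw [hcnt]
      have : c = ((A ++ m :: z₁) ++ [b]).count m := by
        rw [hc, show (A ++ m :: z₁) ++ b :: z₂ = ((A ++ m :: z₁) ++ [b]) ++ z₂ by simp,
          List.count_append, hz2c]; rfl
      omega
  · simp only [if_neg h]
    have hlt : a < v.countP (fun j => decide (j + 1 = m + 1)) := by
      have : v.countP (fun j => decide (j + 1 = m + 1)) = v.count m := by
        rw [List.count]
        apply List.countP_congr
        intro j _
        simp
      omega
    obtain ⟨l₁, b, l₂, rfl, hb, hcnt⟩ := split_countP _ v a hlt
    simp at hb
    subst hb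
    have h0 : b + 1 ∉ l₁ ++ b :: l₂ := fun hh => by have := hm _ hh; omega
    have h0c := List.count_eq_zero_of_not_mem h0
    have := insert_all l₁ l₂ b (b + 1) a hv le_rfl (fun c hc => (hm c hc).trans (by omega))
      (fun hh => h0 (by simp [hh]))
      (by
        rw [hcnt, List.count_eq_zero_of_not_mem]
        · omega
        · intro hh; apply h0; simp at hh ⊢; tauto)
    rwa [h0c] at this

theorem get1_snoc (u : List ℕ) (a i : ℕ) (h : i ≤ u.length) (h1 : 1 ≤ i) :
    get1 (u ++ [a]) i = get1 u i := by
  unfold get1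
  rw [List.getD_append _ _ _ _ (by omega)]

theorem bseq_snoc (u : List ℕ) (a : ℕ) : ∀ i, i ≤ u.length → bseq (u ++ [a]) i = bseq u i
  | 0, _ => rfl
  | 1, _ => rfl
  | i + 2, h => by
    rw [bseq, bseq, bseq_snoc u a (i + 1) (by omega), get1_snoc _ _ _ h (by omega)]

theorem bseq_last (u : List ℕ) (a : ℕ) (hu : u ≠ []) :
    bseq (u ++ [a]) (u.length + 1)
      = if bseq u u.length + 1 ≤ a then bseq u u.length + 1 else 0 := by
  have : 0 < u.length := List.length_pos_iff.2 hu
  obtain ⟨k, hk⟩ : ∃ k, u.length = k + 1 := ⟨u.length - 1, by omega⟩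
  have h3 : get1 (u ++ [a]) (u.length + 1) = a := by simp [get1]
  rw [hk] at h3 ⊢
  rw [bseq, h3, bseq_snoc u a _ (by omega)]

theorem bounces_snoc (u : List ℕ) (a : ℕ) (hu : u ≠ []) :
    bounces (u ++ [a]) = if bseq u u.length + 1 ≤ a then bounces u
      else insert (u.length + 1) (bounces u) := by
  have hpos : 0 < u.length := List.length_pos_iff.2 hu
  unfold bounces
  have h : Finset.Icc 2 (u ++ [a]).length = insert (u.length + 1) (Finset.Icc 2 u.length) := by
    ext j; simp; omega
  rw [h, Finset.filter_insert, bseq_last u a hu]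
  have h2 : (Finset.Icc 2 u.length).filter (fun i => bseq (u ++ [a]) i = 0)
      = (Finset.Icc 2 u.length).filter (fun i => bseq u i = 0) := by
    apply Finset.filter_congr
    intro j hj
    simp only [Finset.mem_Icc] at hj
    rw [bseq_snoc _ _ _ hj.2]
  rw [h2]
  by_cases hc : bseq u u.length + 1 ≤ a <;> simp [hc]

theorem mem_bounces_le {u : List ℕ} {i : ℕ} (h : i ∈ bounces u) : i ≤ u.length := by
  simp [bounces] at h; omega

theorem card_bounces_snoc (u : List ℕ) (a : ℕ) (hu : u ≠ []) :
    (bounces (u ++ [a])).card = if bseq u u.length + 1 ≤ a then (bounces u).card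
      else (bounces u).card + 1 := by
  rw [bounces_snoc u a hu]
  split_ifs
  · rfl
  · rw [Finset.card_insert_of_notMem]
    intro h; have := mem_bounces_le h; omega

theorem bounce_snoc (u : List ℕ) (a : ℕ) (hu : u ≠ []) :
    bounce (u ++ [a]) = bounce u + (bounces (u ++ [a])).card := by
  have h1 : ∑ i ∈ bounces u, (u.length + 1 - i + 1) = bounce u + (bounces u).card := by
    rw [bounce, Finset.card_eq_sum_ones, ← Finset.sum_add_distrib]
    apply Finset.sum_congr rfl
    intro i hi
    have := mem_bounces_le hi
    omega
  rw [card_bounces_snoc u a hu, bounce, bounces_snoc u a hu, List.length_append,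
    List.length_singleton]
  split_ifs
  · exact h1
  · rw [Finset.sum_insert, h1]
    · omega
    · intro h; have := mem_bounces_le h; omega

theorem exists_rel (u : List ℕ) (hu : IsAreaSeq u) :
    ∃ v, RelR u v ∧ IsAreaSeq v ∧ v.length = u.length ∧ dinv v = area u ∧ area v = bounce u ∧
      (u ≠ [] → GoodR v (bounces u).card (bseq u u.length + 1) (u.getLastD 0)) := by
  induction u using List.reverseRecOn with
  | nil => exact ⟨[], RelR.nil, hu, rfl, by simp [dinv, area], by simp [area, bounce, bounces], by simp⟩
  | append_singleton u a ih =>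
    obtain ⟨h1, h2, h3⟩ := isAreaSeq_snoc u a hu
    obtain ⟨v, r, hv, hlen, hd, ha, hg⟩ := ih h1
    by_cases h0 : u = []
    · obtain rfl := h3 h0
      subst h0
      simp at hlen
      subst hlen
      refine ⟨[0], RelR.step r ⟨0, [], [], by simp⟩, hu, rfl, ?_, ?_, ?_⟩
      · simp [dinv_eq, dinvR, area]
      · simp [area, bounce, bounces]
      · intro _
        refine ⟨by simp, by simp [bounces, bseq], [], [], by simp [bounces], by simp, by simp [bseq]⟩
    · obtain ⟨v', s, hv', hg', ha', hd', hl'⟩ := step_exists v _ _ _ a hv (hg h0) h2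
      refine ⟨v', RelR.step r s, hv', by simp [hl', hlen], ?_, ?_, ?_⟩
      · rw [hd', hd]; simp [area]
      · rw [bounce_snoc u a h0, card_bounces_snoc u a h0, ha', ha]
      · intro _
        rw [card_bounces_snoc u a h0, List.length_append, List.length_singleton, bseq_last u a h0]
        convert hg' using 1
        · split_ifs <;> rfl
        · simp

theorem finite_area (n : ℕ) : {w : List ℕ | IsAreaSeq w ∧ w.length = n}.Finite := by
  induction n with
  | zero =>
    apply (Set.finite_singleton ([] : List ℕ)).subset
    rintro w ⟨_, h⟩
    simpa using h
  | succ n ih =>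
    apply (ih.biUnion (t := fun u => (fun a => u ++ [a]) '' Set.Iic (u.getLastD 0 + 1))
      (fun u _ => (Set.finite_Iic _).image _)).subset
    rintro w ⟨hw, hl⟩
    induction w using List.reverseRecOn with
    | nil => simp at hl
    | append_singleton u a _ =>
      obtain ⟨h1, h2, _⟩ := isAreaSeq_snoc u a hw
      simp only [Set.mem_iUnion]
      exact ⟨u, ⟨h1, by simpa using hl⟩, a, h2, rfl⟩

/-- The number of area sequences of size `n` with dinv `q` and area `t` equals
the number of area sequences of size `n` with area `q` and bounce `t`. -/
theorem card_dinv_area_eq_card_area_bounce (n q t : ℕ) :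
    Nat.card {w : List ℕ // IsAreaSeq w ∧ w.length = n ∧ dinv w = q ∧ area w = t} =
      Nat.card {w : List ℕ // IsAreaSeq w ∧ w.length = n ∧ area w = q ∧ bounce w = t} := by
  choose! f hr hv hl hd ha _ using exists_rel
  have inj : Set.InjOn f {w : List ℕ | IsAreaSeq w ∧ w.length = n} := by
    intro x hx y hy hxy
    have h1 := hr x hx.1
    rw [hxy] at h1
    exact h1.unique (hr y hy.1)
  have maps : Set.MapsTo f {w : List ℕ | IsAreaSeq w ∧ w.length = n}
      {w : List ℕ | IsAreaSeq w ∧ w.length = n} :=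
    fun x hx => ⟨hv x hx.1, (hl x hx.1).trans hx.2⟩
  have surj : Set.SurjOn f {w : List ℕ | IsAreaSeq w ∧ w.length = n}
      {w : List ℕ | IsAreaSeq w ∧ w.length = n} := by
    have := Set.eq_of_subset_of_ncard_le maps.image_subset
      (Set.ncard_image_of_injOn inj).ge (finite_area n)
    exact this.ge
  symm
  refine Nat.card_congr (Equiv.ofBijective (fun x => ⟨f x.1, hv _ x.2.1,
    (hl _ x.2.1).trans x.2.2.1, (hd _ x.2.1).trans x.2.2.2.1, (ha _ x.2.1).trans x.2.2.2.2⟩) ⟨?_, ?_⟩)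
  · rintro ⟨x, hx⟩ ⟨y, hy⟩ hxy
    simp only [Subtype.mk.injEq] at hxy ⊢
    exact inj ⟨hx.1, hx.2.1⟩ ⟨hy.1, hy.2.1⟩ hxy
  · rintro ⟨y, hy⟩
    obtain ⟨x, hx, rfl⟩ := surj ⟨hy.1, hy.2.1⟩
    exact ⟨⟨x, hx.1, hx.2, (hd _ hx.1).symm.trans hy.2.2.1, (ha _ hx.1).symm.trans hy.2.2.2⟩, rfl⟩
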